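/- Define σ_i(θ) = ((Λ(θ)+D)_{ii})^{-1/2} = (θ e^{μ_i + x*_i(θ)} + D_{ii})^{-1/2}, σ(θ) = (σ_1(θ),…,σ_n(θ)), and M(θ) = diag(σ(θ)) (Λ(θ)+D) diag(σ(θ)). Then for every θ > 0, I(θ) = L(θ)/L̃(θ) = ∫_{ℝ^n} (2π)^{-n/2} (det M(θ))^{1/2} exp{ −(1/2) zᵀ M(θ) z − θ ∑_{i=1}^n e^{μ_i + x*_i(θ)} ( e^{σ_i(θ) z_i} − 1 − σ_i(θ) z_i − (1/2) σ_i(θ)² z_i² ) } dz. -/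

import Mathlib

open Real Matrix MeasureTheory

/-!
At its critical point `x*`, `h_θ` has no linear term, and its value there is minus the exponent
`(1 - ½ x*)ᵀ D x*` of `L̃`. What is left of `h_θ (x* + w)` is the quadratic form of the Hessian
`Λ + D` and a remainder of order three in `w`. The substitution `x = x* + T z` with `T` invertible
brings in the Jacobian `|det T|`, which is exactly the factor by which `(det (Tᵀ (Λ + D) T))^{1/2}`
differs from `(det (Λ + D))^{1/2}`. The standardised form is the case `T = diag σ`.
-/

section LinearAlgebra

variable {ι R : Type*} [Fintype ι]

theorem add_dotProduct_mulVec_add_of_isSymm [CommSemiring R] {D : Matrix ι ι R} (hD : D.IsSymm)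
    (x w : ι → R) :
    (x + w) ⬝ᵥ D *ᵥ (x + w) = x ⬝ᵥ D *ᵥ x + 2 * (w ⬝ᵥ D *ᵥ x) + w ⬝ᵥ D *ᵥ w := by
  have hcomm : x ⬝ᵥ D *ᵥ w = w ⬝ᵥ D *ᵥ x := by
    rw [← dotProduct_transpose_mulVec, hD.eq]
  rw [mulVec_add, dotProduct_add, add_dotProduct, add_dotProduct, hcomm]
  ring

theorem dotProduct_transpose_mul_mul_mulVec [CommSemiring R] {κ : Type*} [Fintype κ]
    (A : Matrix ι ι R) (T : Matrix ι κ R) (z : κ → R) :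
    z ⬝ᵥ (Tᵀ * A * T) *ᵥ z = (T *ᵥ z) ⬝ᵥ A *ᵥ (T *ᵥ z) := by
  rw [← mulVec_mulVec, ← mulVec_mulVec, dotProduct_transpose_mulVec, dotProduct_comm]

variable [DecidableEq ι]

theorem det_one_add_mul_eq_det_mul_det_add_inv [CommRing R] {A : Matrix ι ι R}
    (hA : IsUnit A.det) (B : Matrix ι ι R) : (1 + A * B).det = A.det * (B + A⁻¹).det := by
  rw [← det_mul, mul_add, mul_nonsing_inv _ hA, add_comm]

theorem rpow_neg_half_det_one_add_mul {A B : Matrix ι ι ℝ} (hA : 0 < A.det)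
    (hB : 0 ≤ (B + A⁻¹).det) :
    (1 + A * B).det ^ (-(1 : ℝ) / 2) =
      A.det ^ (-(1 : ℝ) / 2) * ((B + A⁻¹).det ^ ((1 : ℝ) / 2))⁻¹ := by
  rw [det_one_add_mul_eq_det_mul_det_add_inv hA.ne'.isUnit, mul_rpow hA.le hB,
    ← rpow_neg hB, neg_div]

theorem rpow_half_det_transpose_mul_mul (T A : Matrix ι ι ℝ) :
    (Tᵀ * A * T).det ^ ((1 : ℝ) / 2) = |T.det| * A.det ^ ((1 : ℝ) / 2) := by
  have hdet : (Tᵀ * A * T).det = T.det ^ 2 * A.det := by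
    rw [det_mul, det_mul, det_transpose]
    ring
  rw [hdet, ← sqrt_eq_rpow, ← sqrt_eq_rpow, sqrt_mul (sq_nonneg _), sqrt_sq_eq_abs]

theorem det_diagonal_rpow_ne_zero {a : ι → ℝ} (ha : ∀ i, 0 < a i) (r : ℝ) :
    (diagonal fun i => a i ^ r).det ≠ 0 := by
  rw [det_diagonal]
  exact Finset.prod_ne_zero_iff.2 fun i _ => (rpow_pos_of_pos (ha i) r).ne'

end LinearAlgebra

section LaplaceTransform

variable {ι : Type*} [Fintype ι]

theorem integral_comp_add_mulVec [DecidableEq ι] {E : Type*} [NormedAddCommGroup E]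
    [NormedSpace ℝ E] {T : Matrix ι ι ℝ} (hT : T.det ≠ 0) (c : ι → ℝ) (f : (ι → ℝ) → E) :
    ∫ z, f (c + T *ᵥ z) = |T.det|⁻¹ • ∫ x, f x := by
  have hinj : Function.Injective (toLin' T) :=
    mulVec_injective_iff_isUnit.2 ((isUnit_iff_isUnit_det T).2 hT.isUnit)
  have hemb : MeasurableEmbedding (toLin' T) :=
    (LinearMap.isClosedEmbedding_of_injective (LinearMap.ker_eq_bot.2 hinj)).measurableEmbedding
  calc ∫ z, f (c + T *ᵥ z)
      = ∫ y, f (c + y) ∂(Measure.map (toLin' T) volume) :=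
        (hemb.integral_map fun y => f (c + y)).symm
    _ = |T.det|⁻¹ • ∫ x, f x := by
        rw [map_matrix_volume_pi_eq_smul_volume_pi hT, integral_smul_measure,
          integral_add_left_eq_self f c, ENNReal.toReal_ofReal (abs_nonneg _), abs_inv]

/-- The function `h_θ` of the Laplace transform `L(θ)`, for which `L(θ)` is a Gaussian constant
times `∫ exp (-h_θ)`. -/
noncomputable def laplaceExponent (μ : ι → ℝ) (D : Matrix ι ι ℝ) (θ : ℝ) (x : ι → ℝ) : ℝ :=
  θ * ∑ i, exp (μ i + x i) + (1 / 2) * (x ⬝ᵥ D *ᵥ x)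

/-- The matrix `Λ` at the point `x`: the Hessian of the exponential part of `h_θ`, so that `Λ + D`
is the Hessian of `h_θ`. -/
noncomputable def expHessian [DecidableEq ι] (μ : ι → ℝ) (θ : ℝ) (x : ι → ℝ) : Matrix ι ι ℝ :=
  diagonal fun i => θ * exp (μ i + x i)

/-- The difference between `h_θ (x + w)` and its second-order Taylor polynomial at `x`. It does not
involve `D`, since the quadratic part of `h_θ` is its own Taylor polynomial. -/
noncomputable def taylorRemainder (μ : ι → ℝ) (θ : ℝ) (x w : ι → ℝ) : ℝ :=
  θ * ∑ i, exp (μ i + x i) * (exp (w i) - 1 - w i - (1 / 2) * w i ^ 2)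

theorem taylorRemainder_diagonal_mulVec [DecidableEq ι] (μ : ι → ℝ) (θ : ℝ) (x s z : ι → ℝ) :
    taylorRemainder μ θ x (diagonal s *ᵥ z) =
      θ * ∑ i, exp (μ i + x i) *
        (exp (s i * z i) - 1 - s i * z i - (1 / 2) * s i ^ 2 * z i ^ 2) := by
  simp only [taylorRemainder, mulVec_diagonal, mul_pow, mul_assoc]

theorem mul_sum_exp_add_add [DecidableEq ι] (μ : ι → ℝ) (θ : ℝ) (x w : ι → ℝ) :
    θ * ∑ i, exp (μ i + (x + w) i) =
      θ * ∑ i, exp (μ i + x i) + (w ⬝ᵥ fun i => θ * exp (μ i + x i)) +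
        (1 / 2) * (w ⬝ᵥ expHessian μ θ x *ᵥ w) + taylorRemainder μ θ x w := by
  simp only [expHessian, taylorRemainder, dotProduct, mulVec_diagonal, Finset.mul_sum,
    ← Finset.sum_add_distrib]
  refine Finset.sum_congr rfl fun i _ => ?_
  rw [Pi.add_apply, ← add_assoc, exp_add]
  ring

theorem laplaceExponent_add [DecidableEq ι] {D : Matrix ι ι ℝ} (hD : D.IsSymm) (μ : ι → ℝ)
    (θ : ℝ) (x w : ι → ℝ) :
    laplaceExponent μ D θ (x + w) =
      laplaceExponent μ D θ x + (w ⬝ᵥ ((fun i => θ * exp (μ i + x i)) + D *ᵥ x)) +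
        (1 / 2) * (w ⬝ᵥ (expHessian μ θ x + D) *ᵥ w) + taylorRemainder μ θ x w := by
  simp only [laplaceExponent]
  rw [mul_sum_exp_add_add, add_dotProduct_mulVec_add_of_isSymm hD, dotProduct_add, add_mulVec,
    dotProduct_add]
  ring

section CriticalPoint

variable {μ x : ι → ℝ} {D : Matrix ι ι ℝ} {θ : ℝ}

theorem laplaceExponent_eq_of_critical (hx : ∀ i, θ * exp (μ i + x i) + (D *ᵥ x) i = 0) :
    laplaceExponent μ D θ x = -((1 - (1 / 2 : ℝ) • x) ⬝ᵥ D *ᵥ x) := by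
  have hsum : θ * ∑ i, exp (μ i + x i) = -(1 ⬝ᵥ D *ᵥ x) := by
    rw [one_dotProduct, Finset.mul_sum, ← Finset.sum_neg_distrib]
    exact Finset.sum_congr rfl fun i _ => eq_neg_of_add_eq_zero_left (hx i)
  rw [laplaceExponent, hsum, sub_dotProduct, smul_dotProduct, smul_eq_mul]
  ring

theorem neg_laplaceExponent_add_of_critical [DecidableEq ι] (hD : D.IsSymm)
    (hx : ∀ i, θ * exp (μ i + x i) + (D *ᵥ x) i = 0) (w : ι → ℝ) :
    -laplaceExponent μ D θ (x + w) =
      (1 - (1 / 2 : ℝ) • x) ⬝ᵥ D *ᵥ x +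
        (-(1 / 2) * (w ⬝ᵥ (expHessian μ θ x + D) *ᵥ w) - taylorRemainder μ θ x w) := by
  have hgrad : (fun i => θ * exp (μ i + x i)) + D *ᵥ x = 0 := funext hx
  rw [laplaceExponent_add hD, hgrad, dotProduct_zero, laplaceExponent_eq_of_critical hx]
  ring

theorem integral_exp_neg_laplaceExponent [DecidableEq ι] (hD : D.IsSymm)
    (hx : ∀ i, θ * exp (μ i + x i) + (D *ᵥ x) i = 0) {T : Matrix ι ι ℝ} (hT : T.det ≠ 0) :
    ∫ y, exp (-laplaceExponent μ D θ y) =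
      |T.det| * exp ((1 - (1 / 2 : ℝ) • x) ⬝ᵥ D *ᵥ x) *
        ∫ z, exp (-(1 / 2) * (z ⬝ᵥ (Tᵀ * (expHessian μ θ x + D) * T) *ᵥ z) -
          taylorRemainder μ θ x (T *ᵥ z)) := by
  have hsubst := integral_comp_add_mulVec hT x fun y => exp (-laplaceExponent μ D θ y)
  simp only [neg_laplaceExponent_add_of_critical hD hx, exp_add,
    ← dotProduct_transpose_mul_mul_mulVec] at hsubst
  rw [integral_const_mul, smul_eq_mul, eq_inv_mul_iff_mul_eq₀ (abs_ne_zero.2 hT)] at hsubst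
  rw [← hsubst, ← mul_assoc |T.det|]

end CriticalPoint

theorem correction_factor_standardised_form_general [DecidableEq ι] {μ x : ι → ℝ}
    {Sig : Matrix ι ι ℝ} (hSig : Sig.PosDef) {θ : ℝ} (hθ : 0 ≤ θ)
    (hx : ∀ i, θ * exp (μ i + x i) + (Sig⁻¹ *ᵥ x) i = 0) {T : Matrix ι ι ℝ} (hT : T.det ≠ 0) :
    let M : Matrix ι ι ℝ := Tᵀ * (expHessian μ θ x + Sig⁻¹) * T
    let L : ℝ := (2 * π) ^ (-(Fintype.card ι : ℝ) / 2) * Sig.det ^ (-(1 : ℝ) / 2) *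
      ∫ y, exp (-laplaceExponent μ Sig⁻¹ θ y)
    let Lt : ℝ := (1 + Sig * expHessian μ θ x).det ^ (-(1 : ℝ) / 2) *
      exp ((1 - (1 / 2 : ℝ) • x) ⬝ᵥ Sig⁻¹ *ᵥ x)
    L / Lt =
      ∫ z, (2 * π) ^ (-(Fintype.card ι : ℝ) / 2) * M.det ^ ((1 : ℝ) / 2) *
        exp (-(1 / 2) * (z ⬝ᵥ M *ᵥ z) - taylorRemainder μ θ x (T *ᵥ z)) := by
  intro M L Lt
  have hH : (expHessian μ θ x + Sig⁻¹).PosDef :=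
    hSig.inv.posSemidef_add (.diagonal fun _ => mul_nonneg hθ (exp_nonneg _))
  have hsymm : (Sig⁻¹).IsSymm := isHermitian_iff_isSymm.1 hSig.inv.isHermitian
  have hSigdet : 0 < Sig.det := hSig.det_pos
  have hHdet : 0 < (expHessian μ θ x + Sig⁻¹).det := hH.det_pos
  simp only [L, Lt, M]
  rw [integral_const_mul, integral_exp_neg_laplaceExponent hsymm hx hT,
    rpow_half_det_transpose_mul_mul, rpow_neg_half_det_one_add_mul hSigdet hHdet.le]
  field_simp

end LaplaceTransform

/-- With `σ_i(θ) = (θ e^{μ_i+x*_i} + D_{ii})^{-1/2}` and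
`M(θ) = diag(σ) (Λ+D) diag(σ)`, for every θ > 0 the correction factor
`I(θ) = L(θ)/L̃(θ)` equals
`∫ (2π)^{-n/2} det(M)^{1/2} exp{−½ zᵀ M z − θ ∑ i e^{μ_i+x*_i}(e^{σ_i z_i} − 1 − σ_i z_i − ½σ_i² z_i²)} dz`. -/
theorem correction_factor_standardised_form
    (n : ℕ) (hn : 1 ≤ n) (μ : Fin n → ℝ) (Sig : Matrix (Fin n) (Fin n) ℝ)
    (hSig : Sig.PosDef) (θ : ℝ) (hθ : 0 < θ)
    (D : Matrix (Fin n) (Fin n) ℝ) (hD : D = Sig⁻¹)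
    (xstar : Fin n → ℝ)
    (hx : ∀ i, θ * Real.exp (μ i + xstar i) + D.mulVec xstar i = 0) :
    let Λ : Matrix (Fin n) (Fin n) ℝ :=
      Matrix.diagonal fun i => θ * Real.exp (μ i + xstar i)
    let σ : Fin n → ℝ := fun i =>
      (θ * Real.exp (μ i + xstar i) + D i i) ^ (-(1 : ℝ) / 2)
    let M : Matrix (Fin n) (Fin n) ℝ :=
      Matrix.diagonal σ * (Λ + D) * Matrix.diagonal σ
    let L : ℝ := (2 * π) ^ (-(n : ℝ) / 2) * Sig.det ^ (-(1 : ℝ) / 2) *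
      ∫ x : Fin n → ℝ,
        Real.exp (-(θ * ∑ i, Real.exp (μ i + x i) + (1 / 2) * (x ⬝ᵥ D.mulVec x)))
    let Lt : ℝ := (1 + Sig * Λ).det ^ (-(1 : ℝ) / 2) *
      Real.exp ((1 - (1 / 2 : ℝ) • xstar) ⬝ᵥ D.mulVec xstar)
    L / Lt =
      ∫ z : Fin n → ℝ, (2 * π) ^ (-(n : ℝ) / 2) * M.det ^ ((1 : ℝ) / 2) *
        Real.exp (-(1 / 2) * (z ⬝ᵥ M.mulVec z) -
          θ * ∑ i, Real.exp (μ i + xstar i) *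
            (Real.exp (σ i * z i) - 1 - σ i * z i - (1 / 2) * (σ i) ^ 2 * (z i) ^ 2)) := by
  subst hD
  intro _ σ _ _ _
  have h := correction_factor_standardised_form_general hSig hθ.le hx (T := diagonal σ)
    (det_diagonal_rpow_ne_zero (fun _ => add_pos (by positivity) hSig.inv.diag_pos) _)
  simp only [diagonal_transpose, taylorRemainder_diagonal_mulVec, Fintype.card_fin] at h
  exact h
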